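/- arXiv:1309.7970 — 2 statements merged into one kernel-verified Lean document; each statement's English description precedes it below -/
import Mathlib

section
/- Let x₀ < ⋯ < xₙ be real nodes, let x̂₀ = x₀ < x̂₁ < ⋯ < x̂_{n−1} < x̂ₙ = xₙ, let y ∈ ℝ^{n+1}, and set z_k = z_k(x, x̂). Assume Λ(x̂)·‖z‖_∞ < 1, where Λ(x̂) is the Lebesgue constant of x̂ over [x₀, xₙ]. Then for every t ∈ [x₀, xₙ] distinct from all x̂_k, the second barycentric formula with nodes x̂ and exact weights λ(x) satisfies |E(t; y, z)|/(1 + Λ(x̂)‖z‖_∞) ≤ |q(t; x̂, y, λ(x)) − P_y(t)| ≤ |E(t; y, z)|/(1 − Λ(x̂)‖z‖_∞). -/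
/-- Barycentric weight `λ_k(x) = 1 / ∏_{j ≠ k} (x_k - x_j)`. -/
noncomputable def lam {n : ℕ} (x : Fin (n + 1) → ℝ) (k : Fin (n + 1)) : ℝ :=
  (∏ j ∈ Finset.univ.erase k, (x k - x j))⁻¹

/-- Relative error in the weights `z_k(x, x̂)`. -/
noncomputable def zk {n : ℕ} (x xh : Fin (n + 1) → ℝ) (k : Fin (n + 1)) : ℝ :=
  (lam x k - lam xh k) / lam xh k

/-- The second barycentric formula `q(t; x̂, y, w)`. -/
noncomputable def secondForm {n : ℕ} (xh y w : Fin (n + 1) → ℝ) (t : ℝ) : ℝ :=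
  (∑ k, w k * y k / (t - xh k)) / (∑ k, w k / (t - xh k))

/-- The Error Polynomial `E(t; y, z) = P_{yz}(t) - P_y(t)·P_z(t)`. -/
noncomputable def errP {n : ℕ} (xh y z : Fin (n + 1) → ℝ) (t : ℝ) : ℝ :=
  (Lagrange.interpolate Finset.univ xh (fun k => y k * z k)).eval t -
    (Lagrange.interpolate Finset.univ xh y).eval t *
      (Lagrange.interpolate Finset.univ xh z).eval t

/-- The Lebesgue constant of the node family `v` over the interval `[a, b]`. -/
noncomputable def leb {ι : Type*} [Fintype ι] [DecidableEq ι] (v : ι → ℝ) (a b : ℝ) : ℝ :=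
  ⨆ t : Set.Icc a b, ∑ k, |(Lagrange.basis Finset.univ v k).eval (t : ℝ)|

/-!
Write the weights of the second barycentric formula as `λ_k(x̂) r_k`. Multiplying its numerator and
denominator by `∏ k, (t - x̂_k)` turns each into a first barycentric formula with weights `λ(x̂)`,
so that the quotient is `P_{ry}(t) / P_r(t)`. For `r = 1 + z`, linearity of interpolation and
`P_1 = 1` make this `(P_y + P_{yz}) / (1 + P_z)`, whose difference from `P_y` is `E / (1 + P_z)`.
Both bounds then follow from `|P_z(t)| ≤ Λ(x̂) ‖z‖_∞ < 1`.
-/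

open Finset Lagrange Polynomial

section Field

variable {F ι : Type*} [Field F] [DecidableEq ι] {s : Finset ι} {v : ι → F} {t : F}

theorem sum_nodalWeight_mul_div_sum_eq (ht : ∀ i ∈ s, t ≠ v i) (r y : ι → F) :
    (∑ i ∈ s, nodalWeight s v i * r i * y i / (t - v i)) /
        (∑ i ∈ s, nodalWeight s v i * r i / (t - v i)) =
      (interpolate s v (r * y)).eval t / (interpolate s v r).eval t := by
  rw [eval_interpolate_not_at_node _ ht, eval_interpolate_not_at_node _ ht,
    mul_div_mul_left _ _ (eval_nodal_not_at_node ht)]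
  congr 1 <;> refine sum_congr rfl fun i _ => ?_
  · rw [Pi.mul_apply]
    ring
  · ring

theorem eval_interpolate_one_add (hv : Set.InjOn v s) (hs : s.Nonempty) (z : ι → F) :
    (interpolate s v (1 + z)).eval t = 1 + (interpolate s v z).eval t := by
  rw [map_add, interpolate_one hv hs, eval_add, eval_one]

end Field

section LinearOrderedField

variable {F ι : Type*} [Field F] [LinearOrder F] [IsStrictOrderedRing F]

theorem abs_eval_interpolate_le_sum_abs_basis_mul [DecidableEq ι] {s : Finset ι} {z : ι → F} {M : F}
    (hz : ∀ i ∈ s, |z i| ≤ M) (v : ι → F) (t : F) :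
    |(interpolate s v z).eval t| ≤ (∑ i ∈ s, |(Lagrange.basis s v i).eval t|) * M := by
  calc |(interpolate s v z).eval t|
      = |∑ i ∈ s, z i * (Lagrange.basis s v i).eval t| := by
        simp only [interpolate_apply, eval_finsetSum, eval_mul, eval_C]
    _ ≤ ∑ i ∈ s, |z i * (Lagrange.basis s v i).eval t| := abs_sum_le_sum_abs _ _
    _ ≤ ∑ i ∈ s, |(Lagrange.basis s v i).eval t| * M := by
        refine sum_le_sum fun i hi => ?_
        rw [abs_mul, mul_comm]
        exact mul_le_mul_of_nonneg_left (hz i hi) (abs_nonneg _)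
    _ = (∑ i ∈ s, |(Lagrange.basis s v i).eval t|) * M := (sum_mul ..).symm

theorem abs_div_one_add_bounds {p B : F} (hp : |p| ≤ B) (hB : B < 1) (e : F) :
    |e| / (1 + B) ≤ |e / (1 + p)| ∧ |e / (1 + p)| ≤ |e| / (1 - B) := by
  obtain ⟨hlower, hupper⟩ := abs_le.mp hp
  have hpos : 0 < 1 + p := by linarith
  rw [abs_div, abs_of_pos hpos]
  constructor
  · exact div_le_div_of_nonneg_left (abs_nonneg e) hpos (by linarith)
  · exact div_le_div_of_nonneg_left (abs_nonneg e) (sub_pos.mpr hB) (by linarith)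

end LinearOrderedField

section LebesgueConstant

variable {ι : Type*} [Fintype ι] [DecidableEq ι] {a b t : ℝ}

theorem sum_abs_eval_basis_le_leb (v : ι → ℝ) (ht : t ∈ Set.Icc a b) :
    ∑ k, |(Lagrange.basis univ v k).eval t| ≤ leb v a b := by
  have hcont : Continuous fun u : Set.Icc a b =>
      ∑ k, |(Lagrange.basis univ v k).eval (u : ℝ)| := by
    fun_prop
  exact le_ciSup (isCompact_range hcont).bddAbove (⟨t, ht⟩ : Set.Icc a b)

theorem abs_eval_interpolate_le_leb_mul_sup' [Nonempty ι] (v z : ι → ℝ) (ht : t ∈ Set.Icc a b) :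
    |(interpolate univ v z).eval t| ≤
      leb v a b * univ.sup' univ_nonempty fun k => |z k| := by
  have hz (k : ι) : |z k| ≤ univ.sup' univ_nonempty fun k => |z k| :=
    le_sup' (fun k => |z k|) (mem_univ k)
  have hsup_nonneg : 0 ≤ univ.sup' univ_nonempty fun k => |z k| :=
    (abs_nonneg _).trans (hz (Classical.arbitrary ι))
  calc |(interpolate univ v z).eval t|
      ≤ (∑ k, |(Lagrange.basis univ v k).eval t|) * univ.sup' univ_nonempty fun k => |z k| :=
        abs_eval_interpolate_le_sum_abs_basis_mul (fun k _ => hz k) v t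
    _ ≤ leb v a b * univ.sup' univ_nonempty fun k => |z k| :=
        mul_le_mul_of_nonneg_right (sum_abs_eval_basis_le_leb v ht) hsup_nonneg

end LebesgueConstant

section SecondBarycentricFormula

variable {n : ℕ} {xh : Fin (n + 1) → ℝ}

theorem lam_eq_nodalWeight (x : Fin (n + 1) → ℝ) : lam x = nodalWeight univ x := by
  ext k
  exact (prod_inv_distrib _).symm

theorem lam_eq_lam_mul_one_add_zk (x : Fin (n + 1) → ℝ) (hxh : xh.Injective) :
    lam x = lam xh * (1 + zk x xh) := by
  ext k
  have hlam : lam xh k ≠ 0 := by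
    rw [lam_eq_nodalWeight]
    exact nodalWeight_ne_zero hxh.injOn (mem_univ k)
  simp only [zk, Pi.mul_apply, Pi.add_apply, Pi.one_apply]
  field_simp
  ring

theorem secondForm_lam_mul {t : ℝ} (ht : ∀ k, t ≠ xh k) (y r : Fin (n + 1) → ℝ) :
    secondForm xh y (lam xh * r) t =
      (interpolate univ xh (r * y)).eval t / (interpolate univ xh r).eval t := by
  rw [lam_eq_nodalWeight]
  exact sum_nodalWeight_mul_div_sum_eq (fun k _ => ht k) r y

theorem secondForm_sub_eval_interpolate (hxh : xh.Injective) {t : ℝ} (ht : ∀ k, t ≠ xh k)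
    (y : Fin (n + 1) → ℝ) {z : Fin (n + 1) → ℝ}
    (hz : 1 + (interpolate univ xh z).eval t ≠ 0) :
    secondForm xh y (lam xh * (1 + z)) t - (interpolate univ xh y).eval t =
      errP xh y z t / (1 + (interpolate univ xh z).eval t) := by
  have hnum : (interpolate univ xh ((1 + z) * y)).eval t =
      (interpolate univ xh y).eval t + (interpolate univ xh fun k => y k * z k).eval t := by
    rw [← eval_add, ← map_add, add_mul, one_mul, mul_comm z y]
    rfl
  rw [secondForm_lam_mul ht, eval_interpolate_one_add hxh.injOn univ_nonempty, hnum, errP,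
    div_sub' hz]
  ring

end SecondBarycentricFormula

theorem stmt_5_general {n : ℕ} {xh : Fin (n + 1) → ℝ} (hxh : xh.Injective)
    (y z : Fin (n + 1) → ℝ) {a b t : ℝ}
    (hsmall : leb xh a b * (univ.sup' univ_nonempty fun k => |z k|) < 1)
    (ht : t ∈ Set.Icc a b) (ht' : ∀ k, t ≠ xh k) :
    |errP xh y z t| / (1 + leb xh a b * (univ.sup' univ_nonempty fun k => |z k|)) ≤
      |secondForm xh y (lam xh * (1 + z)) t - (interpolate univ xh y).eval t| ∧
    |secondForm xh y (lam xh * (1 + z)) t - (interpolate univ xh y).eval t| ≤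
      |errP xh y z t| / (1 - leb xh a b * (univ.sup' univ_nonempty fun k => |z k|)) := by
  have hbound := abs_eval_interpolate_le_leb_mul_sup' xh z ht
  have hpos : 0 < 1 + (interpolate univ xh z).eval t := by
    linarith [neg_le_of_abs_le hbound]
  rw [secondForm_sub_eval_interpolate hxh ht' y hpos.ne']
  exact abs_div_one_add_bounds hbound hsmall _

theorem stmt_5 {n : ℕ} (x xh y : Fin (n + 1) → ℝ)
    (hx : StrictMono x) (hxh : StrictMono xh)
    (h0 : xh 0 = x 0) (hn : xh (Fin.last n) = x (Fin.last n))
    (hsmall : leb xh (x 0) (x (Fin.last n)) *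
      (Finset.univ.sup' Finset.univ_nonempty fun k => |zk x xh k|) < 1)
    (t : ℝ) (ht : t ∈ Set.Icc (x 0) (x (Fin.last n))) (ht' : ∀ k, t ≠ xh k) :
    |errP xh y (zk x xh) t| /
        (1 + leb xh (x 0) (x (Fin.last n)) *
          (Finset.univ.sup' Finset.univ_nonempty fun k => |zk x xh k|)) ≤
      |secondForm xh y (lam x) t - (Lagrange.interpolate Finset.univ xh y).eval t| ∧
    |secondForm xh y (lam x) t - (Lagrange.interpolate Finset.univ xh y).eval t| ≤
      |errP xh y (zk x xh) t| /
        (1 - leb xh (x 0) (x (Fin.last n)) *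
          (Finset.univ.sup' Finset.univ_nonempty fun k => |zk x xh k|)) := by
  rw [lam_eq_lam_mul_one_add_zk x hxh.injective]
  exact stmt_5_general hxh.injective y (zk x xh) hsmall ht ht'
end

section
/- Let v ∈ ℝⁿ satisfy ‖v‖₁ := Σ_{k=1}^n |v_k| < 1 and set s := Σ_{k=1}^n v_k. Then 0 ≤ ∏_{k=1}^n 1/(1 + v_k) − (1 − s) ≤ ‖v‖₁²/(1 − ‖v‖₁). -/
/-!
The lower bound follows from `1 + x ≤ exp x`, which gives
`∏ (1 + v k)⁻¹ ≥ exp (-∑ v k) ≥ 1 - ∑ v k`.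

For the upper bound, expand `∏ (1 + v k)⁻¹ - (1 - ∑ v k)` as a power series in the `v k`. Passing to
absolute values term by term bounds it by the same expression at `-|v k|`, namely
`∏ (1 - |v k|)⁻¹ - (1 + ‖v‖₁)`. Since `∏ (1 - |v k|) ≥ 1 - ‖v‖₁`, this is at most
`(1 - ‖v‖₁)⁻¹ - (1 + ‖v‖₁) = ‖v‖₁ ^ 2 / (1 - ‖v‖₁)`. The majorization needs no series: it holds for
each factor and survives multiplication, because `p * q - 1 = (p - 1) + (q - 1) + (p - 1) * (q - 1)`
is a polynomial with nonnegative coefficients in `p - 1` and `q - 1`.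
-/

open Finset

variable {ι : Type*} {s : Finset ι}

section Majorant

variable {R : Type*} [NormedCommRing R] {a : ι → R} {A : ι → ℝ}

lemma norm_prod_one_add_sub_one_le_of_norm_le (h : ∀ i ∈ s, ‖a i‖ ≤ A i) :
    ‖∏ i ∈ s, (1 + a i) - 1‖ ≤ ∏ i ∈ s, (1 + A i) - 1 := by
  classical
  induction s using Finset.induction_on with
  | empty => simp
  | insert j s hj ih =>
    obtain ⟨hja, hs⟩ := (forall_mem_insert _ _ _).1 h
    have ih := ih hs
    rw [prod_insert hj, prod_insert hj]
    set P := ∏ i ∈ s, (1 + a i)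
    set Q := ∏ i ∈ s, (1 + A i)
    calc ‖(1 + a j) * P - 1‖ = ‖a j + (P - 1) + a j * (P - 1)‖ := by ring_nf
      _ ≤ A j + (Q - 1) + A j * (Q - 1) :=
        norm_add_le_of_le (norm_add_le_of_le hja ih) (norm_mul_le_of_le hja ih)
      _ = (1 + A j) * Q - 1 := by ring

lemma norm_prod_one_add_sub_one_sub_sum_le_of_norm_le (h : ∀ i ∈ s, ‖a i‖ ≤ A i) :
    ‖∏ i ∈ s, (1 + a i) - 1 - ∑ i ∈ s, a i‖ ≤ ∏ i ∈ s, (1 + A i) - 1 - ∑ i ∈ s, A i := by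
  classical
  induction s using Finset.induction_on with
  | empty => simp
  | insert j s hj ih =>
    obtain ⟨hja, hs⟩ := (forall_mem_insert _ _ _).1 h
    have ih := ih hs
    have first_order := norm_prod_one_add_sub_one_le_of_norm_le hs
    rw [prod_insert hj, prod_insert hj, sum_insert hj, sum_insert hj]
    set P := ∏ i ∈ s, (1 + a i)
    set Q := ∏ i ∈ s, (1 + A i)
    calc ‖(1 + a j) * P - 1 - (a j + ∑ i ∈ s, a i)‖
        = ‖(P - 1 - ∑ i ∈ s, a i) + a j * (P - 1)‖ := by ring_nf
      _ ≤ (Q - 1 - ∑ i ∈ s, A i) + A j * (Q - 1) :=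
        norm_add_le_of_le ih (norm_mul_le_of_le hja first_order)
      _ = (1 + A j) * Q - 1 - (A j + ∑ i ∈ s, A i) := by ring

end Majorant

section Inverse

lemma inv_one_add_sub_one {K : Type*} [DivisionRing K] {x : K} (hx : 1 + x ≠ 0) :
    (1 + x)⁻¹ - 1 = -(x * (1 + x)⁻¹) := by
  have expanded : (1 + x)⁻¹ + x * (1 + x)⁻¹ = 1 := by rw [← one_add_mul, mul_inv_cancel₀ hx]
  rw [sub_eq_iff_eq_add, neg_add_eq_sub, eq_sub_iff_add_eq, expanded]

variable {K : Type*} [NormedDivisionRing K] {x : K}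

lemma one_add_ne_zero_of_norm_lt_one (hx : ‖x‖ < 1) : 1 + x ≠ 0 := by
  intro h
  rw [← neg_eq_of_add_eq_zero_right h, norm_neg, norm_one] at hx
  exact hx.false

lemma norm_inv_one_add_le (hx : ‖x‖ < 1) : ‖(1 + x)⁻¹‖ ≤ (1 - ‖x‖)⁻¹ := by
  rw [norm_inv]
  refine inv_anti₀ (sub_pos.2 hx) ?_
  simpa using norm_sub_norm_le (1 : K) (-x)

lemma norm_inv_one_add_sub_one_le (hx : ‖x‖ < 1) : ‖(1 + x)⁻¹ - 1‖ ≤ (1 - ‖x‖)⁻¹ - 1 := by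
  have hx' : 1 - ‖x‖ ≠ 0 := (sub_pos.2 hx).ne'
  calc ‖(1 + x)⁻¹ - 1‖ = ‖x‖ * ‖(1 + x)⁻¹‖ := by
        rw [inv_one_add_sub_one (one_add_ne_zero_of_norm_lt_one hx), norm_neg, norm_mul]
    _ ≤ ‖x‖ * (1 - ‖x‖)⁻¹ := by gcongr; exact norm_inv_one_add_le hx
    _ = (1 - ‖x‖)⁻¹ - 1 := by field_simp; ring

lemma norm_inv_one_add_sub_one_add_le (hx : ‖x‖ < 1) :
    ‖(1 + x)⁻¹ - 1 + x‖ ≤ (1 - ‖x‖)⁻¹ - 1 - ‖x‖ := by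
  have hx' : 1 - ‖x‖ ≠ 0 := (sub_pos.2 hx).ne'
  have remainder : (1 + x)⁻¹ - 1 + x = -(x * ((1 + x)⁻¹ - 1)) := by
    rw [mul_sub_one, neg_sub, inv_one_add_sub_one (one_add_ne_zero_of_norm_lt_one hx),
      neg_add_eq_sub]
  calc ‖(1 + x)⁻¹ - 1 + x‖ = ‖x‖ * ‖(1 + x)⁻¹ - 1‖ := by rw [remainder, norm_neg, norm_mul]
    _ ≤ ‖x‖ * ((1 - ‖x‖)⁻¹ - 1) := by gcongr; exact norm_inv_one_add_sub_one_le hx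
    _ = (1 - ‖x‖)⁻¹ - 1 - ‖x‖ := by field_simp; ring

end Inverse

lemma one_sub_sum_le_prod_one_sub {R : Type*} [CommRing R] [LinearOrder R] [IsStrictOrderedRing R]
    {f : ι → R} (h0 : ∀ i ∈ s, 0 ≤ f i) (h1 : ∀ i ∈ s, f i ≤ 1) :
    1 - ∑ i ∈ s, f i ≤ ∏ i ∈ s, (1 - f i) := by
  classical
  induction s using Finset.induction_on with
  | empty => simp
  | insert j s hj ih =>
    obtain ⟨hj0, hs0⟩ := (forall_mem_insert _ _ _).1 h0
    obtain ⟨-, hs1⟩ := (forall_mem_insert _ _ _).1 h1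
    have prod_le : ∏ i ∈ s, (1 - f i) ≤ 1 :=
      prod_le_one (fun i hi ↦ sub_nonneg.2 (hs1 i hi)) fun i hi ↦ sub_le_self _ (hs0 i hi)
    rw [sum_insert hj, prod_insert hj, one_sub_mul]
    linarith [ih hs0 hs1, mul_le_of_le_one_right hj0 prod_le]

lemma one_sub_sum_le_prod_inv_one_add {v : ι → ℝ} (hv : ∀ i ∈ s, 0 < 1 + v i) :
    1 - ∑ i ∈ s, v i ≤ ∏ i ∈ s, (1 + v i)⁻¹ :=
  calc 1 - ∑ i ∈ s, v i ≤ Real.exp (-∑ i ∈ s, v i) := Real.one_sub_le_exp_neg _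
    _ = ∏ i ∈ s, Real.exp (-v i) := by rw [← sum_neg_distrib, Real.exp_sum]
    _ ≤ ∏ i ∈ s, (1 + v i)⁻¹ := by
      refine prod_le_prod (fun i _ ↦ (Real.exp_pos _).le) fun i hi ↦ ?_
      rw [Real.exp_neg, add_comm]
      exact inv_anti₀ (add_comm 1 (v i) ▸ hv i hi) (Real.add_one_le_exp _)

section NormedField

variable {𝕜 : Type*} [NormedField 𝕜] {v : ι → 𝕜}

lemma norm_prod_inv_one_add_sub_le_prod (hv : ∀ i ∈ s, ‖v i‖ < 1) :
    ‖∏ i ∈ s, (1 + v i)⁻¹ - (1 - ∑ i ∈ s, v i)‖ ≤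
      ∏ i ∈ s, (1 - ‖v i‖)⁻¹ - (1 + ∑ i ∈ s, ‖v i‖) := by
  have nonlinear := norm_prod_one_add_sub_one_sub_sum_le_of_norm_le
    fun i hi ↦ norm_inv_one_add_sub_one_le (hv i hi)
  have linear := norm_sum_le_of_le s fun i hi ↦ norm_inv_one_add_sub_one_add_le (hv i hi)
  simp only [add_sub_cancel] at nonlinear
  rw [sum_add_distrib, sum_sub_distrib _ fun i ↦ ‖v i‖] at linear
  convert norm_add_le_of_le nonlinear linear using 1
  · congr 1; ring
  · ring

lemma norm_prod_inv_one_add_sub_le (hv : ∑ i ∈ s, ‖v i‖ < 1) :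
    ‖∏ i ∈ s, (1 + v i)⁻¹ - (1 - ∑ i ∈ s, v i)‖ ≤
      (∑ i ∈ s, ‖v i‖) ^ 2 / (1 - ∑ i ∈ s, ‖v i‖) := by
  have norm_lt_one : ∀ i ∈ s, ‖v i‖ < 1 := fun i hi ↦
    (single_le_sum (fun j _ ↦ norm_nonneg (v j)) hi).trans_lt hv
  have weierstrass : 1 - ∑ i ∈ s, ‖v i‖ ≤ ∏ i ∈ s, (1 - ‖v i‖) :=
    one_sub_sum_le_prod_one_sub (fun i _ ↦ norm_nonneg _) fun i hi ↦ (norm_lt_one i hi).le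
  have hpos : 0 < 1 - ∑ i ∈ s, ‖v i‖ := sub_pos.2 hv
  calc ‖∏ i ∈ s, (1 + v i)⁻¹ - (1 - ∑ i ∈ s, v i)‖
      ≤ ∏ i ∈ s, (1 - ‖v i‖)⁻¹ - (1 + ∑ i ∈ s, ‖v i‖) :=
        norm_prod_inv_one_add_sub_le_prod norm_lt_one
    _ ≤ (1 - ∑ i ∈ s, ‖v i‖)⁻¹ - (1 + ∑ i ∈ s, ‖v i‖) := by
      rw [prod_inv_distrib]
      gcongr
    _ = (∑ i ∈ s, ‖v i‖) ^ 2 / (1 - ∑ i ∈ s, ‖v i‖) := by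
      field_simp
      ring

end NormedField

theorem stmt_12 {n : ℕ} (v : Fin n → ℝ) (h1 : ∑ k, |v k| < 1) :
    0 ≤ (∏ k, (1 + v k)⁻¹) - (1 - ∑ k, v k) ∧
      (∏ k, (1 + v k)⁻¹) - (1 - ∑ k, v k) ≤
        (∑ k, |v k|) ^ 2 / (1 - ∑ k, |v k|) := by
  have one_add_pos : ∀ k ∈ univ, 0 < 1 + v k := fun k hk ↦ by
    have : |v k| < 1 := (single_le_sum (fun j _ ↦ abs_nonneg (v j)) hk).trans_lt h1
    linarith [neg_abs_le (v k)]
  exact ⟨sub_nonneg.2 (one_sub_sum_le_prod_inv_one_add one_add_pos),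
    (Real.le_norm_self _).trans (norm_prod_inv_one_add_sub_le h1)⟩
end
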